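/- In the partition setting under Assumptions (D), (M) and (B), let r ∈ ℕ, p = 2^r, and assume α·γ^{p−2} < 1. Then for all 1 ≤ j < k ≤ n, every i ∈ I_j and every bounded measurable f: ‖q̂_{j,k}(f)‖_{j,i,p} ≤ M_{j,k}(i)·δ(p)·max_{l∈s_k(i)} ‖f‖_{k,l,p}, where δ(p) = Π_{t=1}^r γ^{1−2^{−(t−1)}}/(1 − α·γ^{2^t−2})^{2^{−t}}, and moreover δ(p) < γ^{r−2+2^{−(r−1)}}/(1 − α·γ^{2^r−2}). Consequently ‖q̂_{j,k}(f)‖_{j,p} ≤ A_{j,k}·δ(p)·‖f‖_{k,p}. -/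

import Mathlib

/-!
Write `P = 2 ^ t`. The bound is proved for the moments `μ_{j,i}(|q̂_{j,k} f|^P)` by an outer
induction on `t` and an inner backward induction on the level `j`, from `k` down.

For `t = 0`, a kernel that never leaves a cell and preserves `μ_j` preserves integrals over
that cell (`setIntegral_kernel`), so one step of the propagator costs exactly the mass ratio
`m_{j,j+1}(i)` in local `L¹`. For `t + 1`, Jensen's inequality gives
`|K(ḡ h)|^P ≤ K(ḡ · ḡ^(P-1) |h|^P)`; the local `L²` estimate applied to `ḡ^(P-1) |h|^P`, together
with `ḡ ≤ γ m` on the cell, yields (`moment_step`)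
`‖q̂ h‖_{2P}^{2P} ≤ m^{2P} γ^{2P-2} (α ‖h‖_{2P}^{2P} + β ‖h‖_P^{2P})`.
The last term is controlled by the outer induction, the previous one by the inner induction, and
`δ` is precisely the solution of
`δ(2P)^{2P} = γ^{2P-2} (α δ(2P)^{2P} + δ(P)^{2P})` (`deltaP_rec`), so the inner induction closes
without loss. The bookkeeping along the tree of cells is isolated in `tree_induction`: a local
average over a cell is at most the maximum of the averages over its successors
(`integral_muLoc_le_of_cells`), and the product of mass ratios along a branch splits off its
first factor. In that induction successors are described by inclusion of cells instead of by the
predecessor maps, which makes the case `j = k` uniform with the others.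
-/

open MeasureTheory

variable {E : Type} [MeasurableSpace E]
variable {I : ℕ → Type} [∀ k, Fintype (I k)] [∀ k, Nonempty (I k)] [∀ k, DecidableEq (I k)]

/-- The restricted (normalized) measure μ_{k,j}: the restriction of `μ` to the
partition element `S`, normalized to a probability measure. -/
noncomputable def muLoc (μ : Measure E) (S : Set E) : Measure E := (μ S)⁻¹ • μ.restrict S

/-- The local L_p-norm ‖f‖_{k,j,p} = μ_{k,j}(|f|^p)^{1/p}. -/
noncomputable def locNorm (ν : Measure E) (p : ℝ) (f : E → ℝ) : ℝ :=
  (∫ x, |f x| ^ p ∂ν) ^ (1/p)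

/-- The norm ‖f‖_{k,p} = max_{j ∈ I_k} ‖f‖_{k,j,p}. -/
noncomputable def maxNorm (μ : ℕ → Measure E) (F : ∀ k, I k → Set E) (k : ℕ) (p : ℝ)
    (f : E → ℝ) : ℝ :=
  Finset.univ.sup' Finset.univ_nonempty fun j : I k => locNorm (muLoc (μ k) (F k j)) p f

/-- The relative mass change m_{k,k+1}(j) = μ_{k+1}(F_j)/μ_k(F_j). -/
noncomputable def mRatio (μ : ℕ → Measure E) (F : ∀ k, I k → Set E) (k : ℕ) (j : I k) : ℝ :=
  (μ (k+1) (F k j)).toReal / (μ k (F k j)).toReal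

/-- The successor set s_k(i) = {l ∈ I_k | p_j(l) = i} of i ∈ I_j. -/
def succSet (p : ∀ j k : ℕ, I k → I j) (j k : ℕ) (i : I j) : Finset (I k) :=
  Finset.univ.filter fun l => p j k l = i

/-- The product Π_{r=j}^{k-1} m_{r,r+1}(p_r(l)) of relative mass changes along
the branch leading to l ∈ I_k; its maximum over l ∈ s_k(i) is M_{j,k}(i). -/
noncomputable def Mprod (μ : ℕ → Measure E) (F : ∀ k, I k → Set E) (p : ∀ j k : ℕ, I k → I j)
    (j k : ℕ) (l : I k) : ℝ :=
  ∏ r ∈ Finset.Ico j k, mRatio μ F r (p r k l)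

/-- The propagator q_{j,k}(f) = ḡ_{j,j+1}·q̂_{j+1,k}(K_k(f)). -/
noncomputable def qFull (μ : ℕ → Measure E) (g : ℕ → E → ℝ) (K : ℕ → E → Measure E)
    (qhat : ℕ → ℕ → (E → ℝ) → E → ℝ) (j k : ℕ) (f : E → ℝ) : E → ℝ :=
  fun x => (g j x / (∫ z, g j z ∂(μ j))) * qhat (j+1) k (fun y => ∫ z, f z ∂(K k y)) x

/-- The constant δ(2^r) = Π_{t=1}^{r} γ^{1-2^{-(t-1)}}/(1-α·γ^{2^t-2})^{2^{-t}}. -/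
noncomputable def deltaP (α γ : ℝ) (r : ℕ) : ℝ :=
  ∏ t ∈ Finset.Icc 1 r,
    γ ^ (1 - (2:ℝ) ^ (1 - (t:ℝ))) / (1 - α * γ ^ ((2:ℝ) ^ t - 2)) ^ ((2:ℝ) ^ (-(t:ℝ)))

/-! ### Bounded measurable functions and kernels -/

/-- Bounded measurable real functions, the class on which the propagators act. -/
def BddMeas (f : E → ℝ) : Prop := Measurable f ∧ ∃ C : ℝ, ∀ x, |f x| ≤ C

lemma BddMeas.integrable {f : E → ℝ} (hf : BddMeas f) (ν : Measure E) [IsFiniteMeasure ν] :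
    Integrable f ν := by
  obtain ⟨hm, C, hC⟩ := hf
  exact Integrable.of_bound hm.aestronglyMeasurable C (Filter.Eventually.of_forall hC)

lemma BddMeas.mul {f h : E → ℝ} (hf : BddMeas f) (hh : BddMeas h) :
    BddMeas fun x => f x * h x := by
  obtain ⟨hm, C, hC⟩ := hf
  obtain ⟨hm', C', hC'⟩ := hh
  refine ⟨hm.mul hm', C * C', fun x => ?_⟩
  rw [abs_mul]
  exact mul_le_mul (hC x) (hC' x) (abs_nonneg _) ((abs_nonneg _).trans (hC x))

lemma BddMeas.pow {f : E → ℝ} (hf : BddMeas f) (N : ℕ) : BddMeas fun x => f x ^ N := by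
  obtain ⟨hm, C, hC⟩ := hf
  refine ⟨hm.pow_const N, C ^ N, fun x => ?_⟩
  rw [abs_pow]
  exact pow_le_pow_left₀ (abs_nonneg _) (hC x) N

lemma BddMeas.abs {f : E → ℝ} (hf : BddMeas f) : BddMeas fun x => |f x| := by
  obtain ⟨hm, C, hC⟩ := hf
  exact ⟨hm.abs, C, fun x => by rw [abs_abs]; exact hC x⟩

lemma BddMeas.indicator {f : E → ℝ} (hf : BddMeas f) {S : Set E} (hS : MeasurableSet S) :
    BddMeas (S.indicator f) := by
  obtain ⟨hm, C, hC⟩ := hf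
  refine ⟨hm.indicator hS, C, fun x => ?_⟩
  by_cases hx : x ∈ S
  · simpa [hx] using hC x
  · simpa [hx] using (abs_nonneg _).trans (hC x)

lemma BddMeas.kernel {f : E → ℝ} (hf : BddMeas f) {κ : E → Measure E}
    (hκ : ∀ x, IsProbabilityMeasure (κ x))
    (hκm : ∀ A : Set E, MeasurableSet A → Measurable fun x => κ x A) :
    BddMeas fun x => ∫ y, f y ∂(κ x) := by
  obtain ⟨hm, C, hC⟩ := hf
  refine ⟨?_, C, fun x => ?_⟩
  · let η : ProbabilityTheory.Kernel E E := ⟨κ, Measure.measurable_of_measurable_coe _ hκm⟩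
    exact (StronglyMeasurable.integral_kernel (κ := η) hm.stronglyMeasurable).measurable
  · have := hκ x
    have h := norm_integral_le_of_norm_le_const (μ := κ x) (f := f) (C := C)
      (Filter.Eventually.of_forall hC)
    simpa using h

/-- Jensen's inequality for powers. -/
lemma abs_integral_pow_le (ν : Measure E) [IsProbabilityMeasure ν] {f : E → ℝ}
    (hf : BddMeas f) (N : ℕ) : |∫ x, f x ∂ν| ^ N ≤ ∫ x, |f x| ^ N ∂ν := by
  calc |∫ x, f x ∂ν| ^ N ≤ (∫ x, |f x| ∂ν) ^ N :=
        pow_le_pow_left₀ (abs_nonneg _) abs_integral_le_integral_abs N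
    _ ≤ ∫ x, |f x| ^ N ∂ν :=
        (convexOn_pow N).map_integral_le (continuous_pow N).continuousOn isClosed_Ici
          (Filter.Eventually.of_forall fun x => abs_nonneg (f x))
          (hf.abs.integrable ν) ((hf.abs.pow N).integrable ν)

lemma integral_kernel_of_invariant {μ : Measure E} [IsFiniteMeasure μ] {κ : E → Measure E}
    (hκ : ∀ x, IsProbabilityMeasure (κ x))
    (hκm : ∀ A : Set E, MeasurableSet A → Measurable fun x => κ x A)
    (hinv : μ.bind κ = μ) {f : E → ℝ} (hf : BddMeas f) (hf0 : ∀ x, 0 ≤ f x) :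
    ∫ x, ∫ y, f y ∂(κ x) ∂μ = ∫ x, f x ∂μ := by
  have hκ' : Measurable κ := Measure.measurable_of_measurable_coe _ hκm
  rw [integral_eq_lintegral_of_nonneg_ae (Filter.Eventually.of_forall fun x =>
      integral_nonneg hf0) (hf.kernel hκ hκm).1.aestronglyMeasurable,
    integral_eq_lintegral_of_nonneg_ae (Filter.Eventually.of_forall hf0)
      hf.1.aestronglyMeasurable]
  congr 1
  conv_rhs => rw [← hinv]
  rw [Measure.lintegral_bind hκ'.aemeasurable hf.1.ennreal_ofReal.aemeasurable]
  refine lintegral_congr fun x => ?_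
  have := hκ x
  exact ofReal_integral_eq_lintegral_ofReal (hf.integrable _) (Filter.Eventually.of_forall hf0)

/-! ### Local averages and norms -/

lemma integral_muLoc (μ : Measure E) (S : Set E) (f : E → ℝ) :
    ∫ x, f x ∂(muLoc μ S) = (∫ x in S, f x ∂μ) / (μ S).toReal := by
  rw [muLoc, integral_smul_measure, ENNReal.toReal_inv, smul_eq_mul, div_eq_inv_mul]

lemma isProbabilityMeasure_muLoc {μ : Measure E} [IsFiniteMeasure μ] {S : Set E}
    (hS : 0 < μ S) : IsProbabilityMeasure (muLoc μ S) :=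
  ProbabilityTheory.cond_isProbabilityMeasure hS.ne'

lemma ae_muLoc {μ : Measure E} {S : Set E} (hS : MeasurableSet S) :
    ∀ᵐ x ∂(muLoc μ S), x ∈ S :=
  Measure.ae_smul_measure (ae_restrict_mem hS) _

lemma integral_mono_muLoc {μ : Measure E} [IsFiniteMeasure μ] {S : Set E}
    (hS : MeasurableSet S) (h0 : 0 < μ S) {f h : E → ℝ} (hf : BddMeas f) (hh : BddMeas h)
    (hle : ∀ x ∈ S, f x ≤ h x) : ∫ x, f x ∂(muLoc μ S) ≤ ∫ x, h x ∂(muLoc μ S) := by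
  have := isProbabilityMeasure_muLoc h0
  refine integral_mono_ae (hf.integrable _) (hh.integrable _) ?_
  filter_upwards [ae_muLoc hS] with x hx using hle x hx

/-- An average over `S` is at most any common bound for the averages over the cells of a
finite measurable partition of `S`. -/
lemma integral_muLoc_le_of_cells {ι : Type} (s : Finset ι) {G : ι → Set E} {S : Set E}
    {μ : Measure E} [IsFiniteMeasure μ]
    (hG : ∀ l ∈ s, MeasurableSet (G l)) (hd : Set.Pairwise (↑s) (Function.onFun Disjoint G))
    (hS : S = ⋃ l ∈ s, G l) (hpos : ∀ l ∈ s, 0 < μ (G l)) (hS0 : 0 < μ S)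
    {f : E → ℝ} (hf : BddMeas f) {C : ℝ} (hC : ∀ l ∈ s, ∫ x, f x ∂(muLoc μ (G l)) ≤ C) :
    ∫ x, f x ∂(muLoc μ S) ≤ C := by
  have hS' : 0 < (μ S).toReal := ENNReal.toReal_pos hS0.ne' (measure_ne_top _ _)
  rw [integral_muLoc, div_le_iff₀ hS']
  have hμS : (μ S).toReal = ∑ l ∈ s, (μ (G l)).toReal := by
    rw [hS, measure_biUnion_finset hd hG, ENNReal.toReal_sum fun l _ => measure_ne_top _ _]
  rw [hμS, hS, integral_biUnion_finset s hG hd fun l _ => (hf.integrable μ).integrableOn,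
    Finset.mul_sum]
  refine Finset.sum_le_sum fun l hl => ?_
  have := hC l hl
  rwa [integral_muLoc, div_le_iff₀ (ENNReal.toReal_pos (hpos l hl).ne' (measure_ne_top _ _))]
    at this

lemma two_rpow_eq (t : ℕ) : (2:ℝ) ^ t = ((2 ^ t : ℕ) : ℝ) := by push_cast; rfl

lemma locNorm_eq (ν : Measure E) (t : ℕ) (f : E → ℝ) :
    locNorm ν ((2:ℝ) ^ t) f = (∫ x, |f x| ^ (2 ^ t) ∂ν) ^ (1 / ((2 ^ t : ℕ) : ℝ)) := by
  rw [locNorm, two_rpow_eq]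
  simp_rw [Real.rpow_natCast]

lemma locNorm_nonneg (ν : Measure E) (q : ℝ) (f : E → ℝ) : 0 ≤ locNorm ν q f :=
  Real.rpow_nonneg (integral_nonneg fun _ => Real.rpow_nonneg (abs_nonneg _) _) _

lemma locNorm_pow (ν : Measure E) (t : ℕ) (f : E → ℝ) :
    locNorm ν ((2:ℝ) ^ t) f ^ (2 ^ t) = ∫ x, |f x| ^ (2 ^ t) ∂ν := by
  rw [locNorm_eq, one_div, Real.rpow_inv_natCast_pow _ (by positivity)]
  exact integral_nonneg fun x => by positivity

lemma locNorm_two_sq (ν : Measure E) (f : E → ℝ) :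
    locNorm ν 2 f ^ 2 = ∫ x, |f x| ^ 2 ∂ν := by
  simpa using locNorm_pow ν 1 f

/-! ### The constant `δ` -/

lemma deltaP_zero (α γ : ℝ) : deltaP α γ 0 = 1 := by simp [deltaP]

lemma deltaP_succ (α γ : ℝ) (t : ℕ) :
    deltaP α γ (t + 1) = deltaP α γ t *
      (γ ^ (1 - (2:ℝ) ^ (-(t:ℝ))) /
        (1 - α * γ ^ ((2:ℝ) ^ (t + 1) - 2)) ^ ((2:ℝ) ^ (-((t:ℝ) + 1)))) := by
  rw [deltaP, Finset.prod_Icc_succ_top (by omega), ← deltaP]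
  push_cast
  rw [show (1:ℝ) - ((t:ℝ) + 1) = -(t:ℝ) by ring]

lemma small_of_le {α γ : ℝ} (hα : 0 < α) (hγ : 1 ≤ γ) {t r : ℕ} (htr : t ≤ r) :
    α * γ ^ ((2:ℝ) ^ t - 2) ≤ α * γ ^ ((2:ℝ) ^ r - 2) := by
  have : (2:ℝ) ^ t ≤ (2:ℝ) ^ r := pow_le_pow_right₀ (by norm_num) htr
  gcongr

lemma one_le_deltaP {α γ : ℝ} (hα : 0 < α) (hγ : 1 ≤ γ) (r : ℕ)
    (hs : α * γ ^ ((2:ℝ) ^ r - 2) < 1) : 1 ≤ deltaP α γ r := by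
  induction r with
  | zero => rw [deltaP_zero]
  | succ t ih =>
    rw [deltaP_succ]
    refine one_le_mul_of_one_le_of_one_le
      (ih ((small_of_le hα hγ t.le_succ).trans_lt hs)) ?_
    have hx : 0 < 1 - α * γ ^ ((2:ℝ) ^ (t + 1) - 2) := by linarith
    have hx1 : 1 - α * γ ^ ((2:ℝ) ^ (t + 1) - 2) ≤ 1 := by
      have : 0 < α * γ ^ ((2:ℝ) ^ (t + 1) - 2) := by positivity
      linarith
    rw [one_le_div (Real.rpow_pos_of_pos hx _)]
    refine (Real.rpow_le_one hx.le hx1 (by positivity)).trans (Real.one_le_rpow hγ ?_)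
    have : (2:ℝ) ^ (-(t:ℝ)) ≤ 1 :=
      Real.rpow_le_one_of_one_le_of_nonpos (by norm_num) (by simp)
    linarith

/-- The recursion that makes `δ` the fixed point of the one-step estimate. -/
lemma deltaP_rec {α γ : ℝ} (hγ : 1 ≤ γ) (t : ℕ)
    (hs : α * γ ^ ((2:ℝ) ^ (t + 1) - 2) < 1) :
    (γ ^ (2 ^ t - 1)) ^ 2 * (α * deltaP α γ (t + 1) ^ 2 ^ (t + 1) +
      (deltaP α γ t ^ 2 ^ t) ^ 2) = deltaP α γ (t + 1) ^ 2 ^ (t + 1) := by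
  have hγ0 : 0 < γ := by linarith
  have h1 : 1 ≤ 2 ^ t := Nat.one_le_two_pow
  have hcast : ((2:ℝ) ^ (t + 1) - 2) = (((2 ^ t - 1) * 2 : ℕ) : ℝ) := by
    push_cast [h1]; ring
  have hg : γ ^ ((2:ℝ) ^ (t + 1) - 2) = (γ ^ (2 ^ t - 1)) ^ 2 := by
    rw [hcast, Real.rpow_natCast, pow_mul]
  have h2t : (2:ℝ) ^ (-(t:ℝ)) = ((2:ℝ) ^ t)⁻¹ := by
    rw [Real.rpow_neg (by norm_num), Real.rpow_natCast]
  have h2t1 : (2:ℝ) ^ (-((t:ℝ) + 1)) = ((2:ℝ) ^ (t + 1))⁻¹ := by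
    rw [Real.rpow_neg (by norm_num)]; norm_cast
  have hx : 0 < 1 - α * γ ^ ((2:ℝ) ^ (t + 1) - 2) := by linarith
  have hp : deltaP α γ (t + 1) ^ 2 ^ (t + 1) =
      (deltaP α γ t ^ 2 ^ t) ^ 2 * ((γ ^ (2 ^ t - 1)) ^ 2 / (1 - α * (γ ^ (2 ^ t - 1)) ^ 2)) := by
    rw [deltaP_succ, mul_pow, div_pow, ← pow_mul, ← pow_succ]
    congr 2
    · rw [← hg, ← Real.rpow_mul_natCast hγ0.le, h2t]
      congr 1
      push_cast
      field_simp
      ring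
    · rw [← hg, ← Real.rpow_mul_natCast hx.le, h2t1]
      push_cast
      rw [inv_mul_cancel₀ (by positivity), Real.rpow_one]
  rw [hg] at hx
  rw [hp]
  generalize (γ ^ (2 ^ t - 1)) ^ 2 = a at hx ⊢
  generalize (deltaP α γ t ^ 2 ^ t) ^ 2 = b
  rw [div_eq_mul_inv]
  linear_combination (-(a * b)) * mul_inv_cancel₀ hx.ne'

/-- Replacing every factor `1 - α γ^(2^t - 2)` of `δ` by the smallest one, `x`, the exponents
telescope to `γ^(r - 2 + 2^(1-r)) / x^(1 - 2^(-r))`, and `x < x^(1 - 2^(-r))` as `0 < x < 1`. -/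
lemma deltaP_lt {α γ : ℝ} (hα : 0 < α) (hγ : 1 ≤ γ) (r : ℕ)
    (hs : α * γ ^ ((2:ℝ) ^ r - 2) < 1) :
    deltaP α γ r
      < γ ^ ((r:ℝ) - 2 + (2:ℝ) ^ (1 - (r:ℝ))) / (1 - α * γ ^ ((2:ℝ) ^ r - 2)) := by
  have hγ0 : 0 < γ := by linarith
  set x := 1 - α * γ ^ ((2:ℝ) ^ r - 2) with hxdef
  have hx : 0 < x := by linarith
  have hx1 : x < 1 := by
    have : 0 < α * γ ^ ((2:ℝ) ^ r - 2) := by positivity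
    linarith
  have key : ∀ s ≤ r, deltaP α γ s ≤
      γ ^ ((s:ℝ) - 2 + (2:ℝ) ^ (1 - (s:ℝ))) / x ^ (1 - (2:ℝ) ^ (-(s:ℝ))) := by
    intro s
    induction s with
    | zero => intro _; simp [deltaP_zero]
    | succ s ih =>
      intro hsr
      have hexp : (2:ℝ) ^ (1 - (s:ℝ)) = 2 * (2:ℝ) ^ (-(s:ℝ)) := by
        rw [sub_eq_add_neg, Real.rpow_add (by norm_num), Real.rpow_one]
      have hexp' : (2:ℝ) ^ (-((s:ℝ) + 1)) = (2:ℝ) ^ (-(s:ℝ)) / 2 := by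
        rw [neg_add, Real.rpow_add (by norm_num), Real.rpow_neg_one]; ring
      have hxs : x ≤ 1 - α * γ ^ ((2:ℝ) ^ (s + 1) - 2) := by
        have := small_of_le hα hγ hsr
        linarith
      have hroot : x ^ ((2:ℝ) ^ (-((s:ℝ) + 1))) ≤
          (1 - α * γ ^ ((2:ℝ) ^ (s + 1) - 2)) ^ ((2:ℝ) ^ (-((s:ℝ) + 1))) :=
        Real.rpow_le_rpow hx.le hxs (by positivity)
      rw [deltaP_succ]
      calc _ ≤ (γ ^ ((s:ℝ) - 2 + (2:ℝ) ^ (1 - (s:ℝ))) / x ^ (1 - (2:ℝ) ^ (-(s:ℝ)))) *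
            (γ ^ (1 - (2:ℝ) ^ (-(s:ℝ))) / x ^ ((2:ℝ) ^ (-((s:ℝ) + 1)))) := by
              have := ih (by omega)
              have h0 : 0 < 1 - α * γ ^ ((2:ℝ) ^ (s + 1) - 2) := hx.trans_le hxs
              gcongr
        _ = _ := by
              rw [div_mul_div_comm, ← Real.rpow_add hγ0, ← Real.rpow_add hx, hexp, hexp']
              push_cast
              rw [show (1:ℝ) - ((s:ℝ) + 1) = -(s:ℝ) by ring, hexp']
              congr 2 <;> ring
  refine (key r le_rfl).trans_lt ?_
  have hlt : x < x ^ (1 - (2:ℝ) ^ (-(r:ℝ))) := by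
    conv_lhs => rw [← Real.rpow_one x]
    refine Real.rpow_lt_rpow_of_exponent_gt hx hx1 ?_
    have : (0:ℝ) < (2:ℝ) ^ (-(r:ℝ)) := by positivity
    linarith
  exact div_lt_div_of_pos_left (by positivity) hx hlt

/-! ### Backward induction along the tree of cells -/

set_option linter.unusedSectionVars false in
/-- The backward induction along the tree of cells, with all analysis abstracted away. Here
`X t j i` stands for the `2^t`-th moment of `q̂_{j,k}(f)` on the cell `i` of level `j`, and
`X' t j i` for the moment, on the same cell, of `q̂_{j+1,k}(f)` under the next measure.
The outer induction is on `t`, the inner one on `k - j`; `A` bounds the mass-change products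
over all branches below `i`, and passing to level `j + 1` replaces it by `A / m j i`. -/
lemma tree_induction {F : ∀ k, I k → Set E} {anc : ∀ j k, I k → I j} {m : ∀ j, I j → ℝ}
    {X X' : ℕ → ∀ j, I j → ℝ} {α β γ : ℝ} {k r : ℕ}
    (hα : 0 < α) (hβ1 : β ≤ 1) (hγ : 1 ≤ γ)
    (hsmall : α * γ ^ ((2:ℝ) ^ r - 2) < 1)
    (hm : ∀ j, j < k → ∀ i, 0 < m j i)
    (hanc : ∀ j, j < k → ∀ i l, F k l ⊆ F j i → anc j k l = i)
    (hX'0 : ∀ t j i, 0 ≤ X' t j i)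
    (hcells : ∀ t j, 1 ≤ j → j < k → ∀ i C,
      (∀ l : I (j + 1), F (j + 1) l ⊆ F j i → X t (j + 1) l ≤ C) → X' t j i ≤ C)
    (hone : ∀ j, 1 ≤ j → j < k → ∀ i, X 0 j i ≤ m j i * X' 0 j i)
    (hstep : ∀ t j, 1 ≤ j → j < k → ∀ i, X (t + 1) j i ≤
      m j i ^ 2 * ((γ * m j i) ^ (2 ^ t - 1)) ^ 2 * (α * X' (t + 1) j i + β * X' t j i ^ 2))
    (hX0 : ∀ t i, 0 ≤ X t k i)
    (hjen : ∀ t i, X t k i ^ 2 ≤ X (t + 1) k i) :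
    ∀ t, t ≤ r → ∀ d j, 1 ≤ j → j + d = k → ∀ (i : I j) (A B : ℝ), 0 ≤ A → 0 ≤ B →
      (∀ l : I k, F k l ⊆ F j i →
        ∏ q ∈ Finset.Ico j k, m q (anc q k l) ≤ A ∧ X t k l ≤ B ^ 2 ^ t) →
      X t j i ≤ (A * deltaP α γ t * B) ^ 2 ^ t := by
  -- The hypothesis on the branches below `i`, transported to a cell `l` of the next level.
  have hdown : ∀ t j, j < k → ∀ (i : I j) (A B : ℝ),
      (∀ l : I k, F k l ⊆ F j i →
        ∏ q ∈ Finset.Ico j k, m q (anc q k l) ≤ A ∧ X t k l ≤ B ^ 2 ^ t) →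
      ∀ h : I (j + 1), F (j + 1) h ⊆ F j i → ∀ l : I k, F k l ⊆ F (j + 1) h →
        ∏ q ∈ Finset.Ico (j + 1) k, m q (anc q k l) ≤ A / m j i ∧ X t k l ≤ B ^ 2 ^ t := by
    intro t j hjk i A B hAB h hh l hl
    have hli := hl.trans hh
    obtain ⟨h1, h2⟩ := hAB l hli
    refine ⟨?_, h2⟩
    rw [Finset.prod_eq_prod_Ico_succ_bot hjk, hanc j hjk i l hli] at h1
    rw [le_div_iff₀ (hm j hjk i)]
    linarith
  intro t
  induction t with
  | zero =>
    intro _ d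
    induction d with
    | zero =>
      rintro j hj rfl i A B hA hB hAB
      obtain ⟨h1, h2⟩ := hAB i subset_rfl
      simp only [add_zero, Finset.Ico_self, Finset.prod_empty, pow_zero, pow_one] at h1 h2
      rw [deltaP_zero]
      simp only [pow_zero, pow_one, mul_one]
      exact h2.trans (le_mul_of_one_le_left hB h1)
    | succ d ih =>
      intro j hj hjd i A B hA hB hAB
      have hjk : j < k := by omega
      have hmi := hm j hjk i
      have := hcells 0 j hj hjk i _ fun h hh =>
        ih (j + 1) (by omega) (by omega) h (A / m j i) B (by positivity) hB
          (hdown 0 j hjk i A B hAB h hh)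
      refine (hone j hj hjk i).trans ((mul_le_mul_of_nonneg_left this hmi.le).trans_eq ?_)
      rw [pow_zero, pow_one, pow_one]
      field_simp
  | succ t iht =>
    intro htr d
    have hs1 : α * γ ^ ((2:ℝ) ^ (t + 1) - 2) < 1 := (small_of_le hα hγ htr).trans_lt hsmall
    have hδ1 : 1 ≤ deltaP α γ (t + 1) := one_le_deltaP hα hγ _ hs1
    induction d with
    | zero =>
      rintro j hj rfl i A B hA hB hAB
      obtain ⟨h1, h2⟩ := hAB i subset_rfl
      simp only [add_zero, Finset.Ico_self, Finset.prod_empty] at h1 h2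
      refine h2.trans (pow_le_pow_left₀ hB ?_ _)
      exact le_mul_of_one_le_left hB (one_le_mul_of_one_le_of_one_le h1 hδ1)
    | succ d ih =>
      intro j hj hjd i A B hA hB hAB
      have hjk : j < k := by omega
      have hmi := hm j hjk i
      have hA' : 0 ≤ A / m j i := by positivity
      have hbig := hcells (t + 1) j hj hjk i _ fun h hh =>
        ih (j + 1) (by omega) (by omega) h (A / m j i) B hA' hB
          (hdown (t + 1) j hjk i A B hAB h hh)
      have hAB' : ∀ l : I k, F k l ⊆ F j i →
          ∏ q ∈ Finset.Ico j k, m q (anc q k l) ≤ A ∧ X t k l ≤ B ^ 2 ^ t := by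
        intro l hl
        refine ⟨(hAB l hl).1, ?_⟩
        have h2 := (hjen t l).trans (hAB l hl).2
        rw [pow_succ 2 t, pow_mul] at h2
        exact le_of_sq_le_sq h2 (by positivity)
      have hsm := hcells t j hj hjk i _ fun h hh =>
        iht (by omega) d (j + 1) (by omega) (by omega) h (A / m j i) B hA' hB
          (hdown t j hjk i A B hAB' h hh)
      have hsq : β * X' t j i ^ 2 ≤ ((A / m j i * deltaP α γ t * B) ^ 2 ^ t) ^ 2 := by
        have := pow_le_pow_left₀ (hX'0 t j i) hsm 2
        nlinarith [sq_nonneg (X' t j i)]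
      have h1 : 2 ^ t - 1 + 1 = 2 ^ t := Nat.sub_add_cancel Nat.one_le_two_pow
      have hmm : m j i ^ 2 * (m j i ^ (2 ^ t - 1)) ^ 2 = m j i ^ 2 ^ (t + 1) := by
        rw [← mul_pow, ← pow_succ', h1, ← pow_mul, ← pow_succ]
      calc X (t + 1) j i
          ≤ m j i ^ 2 * ((γ * m j i) ^ (2 ^ t - 1)) ^ 2 *
            (α * (A / m j i * deltaP α γ (t + 1) * B) ^ 2 ^ (t + 1) +
              ((A / m j i * deltaP α γ t * B) ^ 2 ^ t) ^ 2) := by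
            refine (hstep t j hj hjk i).trans (mul_le_mul_of_nonneg_left ?_ (by positivity))
            exact add_le_add (mul_le_mul_of_nonneg_left hbig hα.le) hsq
        _ = (m j i ^ 2 * (m j i ^ (2 ^ t - 1)) ^ 2) * (A / m j i * B) ^ 2 ^ (t + 1) *
            ((γ ^ (2 ^ t - 1)) ^ 2 * (α * deltaP α γ (t + 1) ^ 2 ^ (t + 1) +
              (deltaP α γ t ^ 2 ^ t) ^ 2)) := by
            rw [mul_right_comm _ (deltaP α γ (t + 1)), mul_right_comm _ (deltaP α γ t),
              mul_pow _ (deltaP α γ (t + 1)), mul_pow _ (deltaP α γ t), mul_pow γ,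
              pow_succ 2 t, pow_mul (A / m j i * B)]
            ring
        _ = (A * deltaP α γ (t + 1) * B) ^ 2 ^ (t + 1) := by
            rw [deltaP_rec hγ t hs1, hmm, ← mul_pow, ← mul_pow]
            congr 1
            field_simp

/-! ### One-step estimates -/

/-- A `μ`-invariant kernel that never leaves `S` nor `Sᶜ` also preserves integrals over `S`. -/
lemma setIntegral_kernel {μ : Measure E} [IsFiniteMeasure μ] {κ : E → Measure E}
    (hκ : ∀ x, IsProbabilityMeasure (κ x))
    (hκm : ∀ A : Set E, MeasurableSet A → Measurable fun x => κ x A)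
    (hinv : μ.bind κ = μ) {S : Set E} (hS : MeasurableSet S)
    (hout : ∀ x, x ∉ S → κ x S = 0) (hin : ∀ x ∈ S, κ x Sᶜ = 0)
    {f : E → ℝ} (hf : BddMeas f) (hf0 : ∀ x, 0 ≤ f x) :
    ∫ x in S, ∫ y, f y ∂(κ x) ∂μ = ∫ x in S, f x ∂μ := by
  rw [← integral_indicator hS, ← integral_indicator hS,
    ← integral_kernel_of_invariant hκ hκm hinv (hf.indicator hS)
      (fun x => Set.indicator_nonneg (fun y _ => hf0 y) x)]
  congr 1
  ext x
  rw [integral_indicator hS]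
  by_cases hx : x ∈ S
  · rw [Set.indicator_of_mem hx, ← integral_add_compl hS (hf.integrable (ν := κ x)),
      setIntegral_measure_zero _ (hin x hx), add_zero]
  · rw [Set.indicator_of_notMem hx, setIntegral_measure_zero _ (hout x hx)]

/-- Passage from the moment of order `2^t` to the one of order `2^(t+1)`: writing `P = 2^t` and
`h` for the integrand, `|∫ ḡ h dκ|^P ≤ ∫ ḡ · (ḡ^(P-1) |h|^P) dκ`, so the `L²` estimate for the
function `ḡ^(P-1) |h|^P` controls the `2P`-th moment; the bound `ḡ ≤ c` on `S` then removes
the powers of `ḡ`. -/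
lemma moment_step {κ : E → Measure E} (hκ : ∀ x, IsProbabilityMeasure (κ x))
    (hκm : ∀ A : Set E, MeasurableSet A → Measurable fun x => κ x A)
    {μ μ' : Measure E} [IsFiniteMeasure μ] [IsFiniteMeasure μ'] {S : Set E}
    (hS : MeasurableSet S) (hμ : 0 < μ S) (hμ' : 0 < μ' S)
    {G h : E → ℝ} (hG : BddMeas G) (hG0 : ∀ x, 0 ≤ G x) (hh : BddMeas h)
    {α β c m : ℝ} (hα : 0 ≤ α) (hβ : 0 ≤ β) (hGc : ∀ x ∈ S, G x ≤ c)
    (hL2 : ∀ u : E → ℝ, BddMeas u →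
      ∫ x, |∫ y, G y * u y ∂(κ x)| ^ 2 ∂(muLoc μ S) ≤ m ^ 2 *
        (α * ∫ x, |u x| ^ 2 ∂(muLoc μ' S) + β * (∫ x, u x ∂(muLoc μ' S)) ^ 2)) (t : ℕ) :
    ∫ x, |∫ y, G y * h y ∂(κ x)| ^ 2 ^ (t + 1) ∂(muLoc μ S) ≤
      m ^ 2 * (c ^ (2 ^ t - 1)) ^ 2 *
        (α * ∫ x, |h x| ^ 2 ^ (t + 1) ∂(muLoc μ' S) +
          β * (∫ x, |h x| ^ 2 ^ t ∂(muLoc μ' S)) ^ 2) := by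
  have h1 : 2 ^ t - 1 + 1 = 2 ^ t := Nat.sub_add_cancel Nat.one_le_two_pow
  set u : E → ℝ := fun y => G y ^ (2 ^ t - 1) * |h y| ^ 2 ^ t with hu
  have hub : BddMeas u := (hG.pow _).mul (hh.abs.pow _)
  have hu0 : ∀ x, 0 ≤ u x := fun x =>
    mul_nonneg (pow_nonneg (hG0 x) _) (pow_nonneg (abs_nonneg _) _)
  have hJ : ∀ x, |∫ y, G y * h y ∂(κ x)| ^ 2 ^ t ≤ |∫ y, G y * u y ∂(κ x)| := by
    intro x
    have := hκ x
    refine (abs_integral_pow_le (κ x) (hG.mul hh) _).trans ((le_abs_self _).trans_eq ?_)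
    congr 2
    ext y
    rw [abs_mul, mul_pow, abs_of_nonneg (hG0 y), hu]
    simp only
    rw [← mul_assoc, ← pow_succ', h1]
  have hcu : ∀ x ∈ S, u x ≤ c ^ (2 ^ t - 1) * |h x| ^ 2 ^ t := fun x hx =>
    mul_le_mul_of_nonneg_right (pow_le_pow_left₀ (hG0 x) (hGc x hx) _) (by positivity)
  have hint1 : ∫ x, u x ∂(muLoc μ' S) ≤
      c ^ (2 ^ t - 1) * ∫ x, |h x| ^ 2 ^ t ∂(muLoc μ' S) := by
    rw [← integral_const_mul]
    exact integral_mono_muLoc hS hμ' hub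
      (BddMeas.mul ⟨measurable_const, |c ^ (2 ^ t - 1)|, fun _ => le_rfl⟩ (hh.abs.pow _)) hcu
  have hint2 : ∫ x, |u x| ^ 2 ∂(muLoc μ' S) ≤
      (c ^ (2 ^ t - 1)) ^ 2 * ∫ x, |h x| ^ 2 ^ (t + 1) ∂(muLoc μ' S) := by
    rw [← integral_const_mul]
    refine integral_mono_muLoc hS hμ' (hub.abs.pow 2)
      (BddMeas.mul ⟨measurable_const, |(c ^ (2 ^ t - 1)) ^ 2|, fun _ => le_rfl⟩
        (hh.abs.pow _)) fun x hx => ?_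
    rw [abs_of_nonneg (hu0 x), pow_succ 2 t, pow_mul, ← mul_pow]
    exact pow_le_pow_left₀ (hu0 x) (hcu x hx) 2
  have hu_int : 0 ≤ ∫ x, u x ∂(muLoc μ' S) := integral_nonneg hu0
  calc ∫ x, |∫ y, G y * h y ∂(κ x)| ^ 2 ^ (t + 1) ∂(muLoc μ S)
      ≤ ∫ x, |∫ y, G y * u y ∂(κ x)| ^ 2 ∂(muLoc μ S) := by
        refine integral_mono_muLoc hS hμ (((hG.mul hh).kernel hκ hκm).abs.pow _)
          (((hG.mul hub).kernel hκ hκm).abs.pow _) fun x _ => ?_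
        rw [pow_succ 2 t, pow_mul]
        exact pow_le_pow_left₀ (by positivity) (hJ x) 2
    _ ≤ m ^ 2 * (α * ∫ x, |u x| ^ 2 ∂(muLoc μ' S) + β * (∫ x, u x ∂(muLoc μ' S)) ^ 2) :=
        hL2 u hub
    _ ≤ m ^ 2 * (α * ((c ^ (2 ^ t - 1)) ^ 2 * ∫ x, |h x| ^ 2 ^ (t + 1) ∂(muLoc μ' S)) +
          β * (c ^ (2 ^ t - 1) * ∫ x, |h x| ^ 2 ^ t ∂(muLoc μ' S)) ^ 2) := by
        gcongr
    _ = _ := by ring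

/- Proposition 4.10 of the paper: iterated local L_p-bounds for p = 2^r with
   the explicit constant δ(p), together with the closed-form upper bound on
   δ(p). -/
theorem stmt_17
    (n : ℕ) (μ : ℕ → Measure E)
    (hμprob : ∀ k, k ≤ n → IsProbabilityMeasure (μ k))
    (hμac : ∀ j k, j ≤ n → k ≤ n → μ j ≪ μ k)
    (g : ℕ → E → ℝ)
    (hgmeas : ∀ k, Measurable (g k))
    (hgpos : ∀ k x, 0 < g k x)
    (hgbdd : ∀ k, ∃ C : ℝ, ∀ x, g k x ≤ C)
    (hgdens : ∀ k, k < n → ∀ f : E → ℝ, Measurable f → (∃ C : ℝ, ∀ x, |f x| ≤ C) →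
      (∫ x, f x ∂(μ (k+1))) = (∫ x, f x * g k x ∂(μ k)) / (∫ x, g k x ∂(μ k)))
    (K : ℕ → E → Measure E)
    (hKprob : ∀ k x, IsProbabilityMeasure (K k x))
    (hKmeas : ∀ k (A : Set E), MeasurableSet A → Measurable fun x => K k x A)
    (hKinv : ∀ k, k ≤ n → (μ k).bind (K k) = μ k)
    (F : ∀ k, I k → Set E)
    (hFmeas : ∀ k j, MeasurableSet (F k j))
    (hFpos : ∀ k, k ≤ n → ∀ j, 0 < μ 0 (F k j))
    (hFdisj : ∀ k, k ≤ n → ∀ j j' : I k, j ≠ j' → Disjoint (F k j) (F k j'))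
    (hFcover : ∀ k, k ≤ n → (⋃ j : I k, F k j) = Set.univ)
    (p : ∀ j k : ℕ, I k → I j)
    (hp : ∀ j k, j < k → k ≤ n → ∀ l : I k, F k l ⊆ F j (p j k l))
    (hsne : ∀ (j k : ℕ) (_ : j < k) (_ : k ≤ n) (i : I j), (succSet p j k i).Nonempty)
    (hD : ∀ k, 1 ≤ k → k ≤ n → ∀ (j : I k) (x : E), x ∉ F k j → K k x (F k j) = 0)
    (qhat : ℕ → ℕ → (E → ℝ) → E → ℝ)
    (hqdiag : ∀ k f, qhat k k f = f)
    (hqstep : ∀ j k, j < k → k ≤ n → ∀ (f : E → ℝ) (x : E),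
      qhat j k f x = ∫ y, (g j y / (∫ z, g j z ∂(μ j))) * qhat (j+1) k f y ∂(K j x))
    (α β : ℝ) (hα : 0 < α) (hβ0 : 0 ≤ β) (hβ1 : β ≤ 1)
    (hM : ∀ k, 1 ≤ k → k < n → ∀ (i : I k) (f : E → ℝ),
      Measurable f → (∃ C : ℝ, ∀ x, |f x| ≤ C) →
      (locNorm (muLoc (μ k) (F k i)) 2 (qhat k (k+1) f))^2
        ≤ (mRatio μ F k i)^2 *
            (α * (locNorm (muLoc (μ (k+1)) (F k i)) 2 f)^2
              + β * (∫ x, f x ∂(muLoc (μ (k+1)) (F k i)))^2))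
    (γ : ℝ) (hγ : 1 ≤ γ)
    (hB : ∀ k, k < n → ∀ (j : I k) (x : E), x ∈ F k j →
      ((μ k (F k j)).toReal / (μ (k+1) (F k j)).toReal)
        * (g k x / (∫ z, g k z ∂(μ k))) ≤ γ)
    (r : ℕ)
    (hsmall : α * γ ^ ((2:ℝ) ^ r - 2) < 1) :
    (∀ (j k : ℕ) (hjk : j < k) (hkn : k ≤ n), 1 ≤ j → ∀ f : E → ℝ, Measurable f → (∃ C : ℝ, ∀ x, |f x| ≤ C) →
      ∀ i : I j,
        locNorm (muLoc (μ j) (F j i)) ((2:ℝ) ^ r) (qhat j k f)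
          ≤ ((succSet p j k i).sup' (hsne j k hjk hkn i) (Mprod μ F p j k))
            * deltaP α γ r
            * ((succSet p j k i).sup' (hsne j k hjk hkn i) fun l =>
                locNorm (muLoc (μ k) (F k l)) ((2:ℝ) ^ r) f))
    ∧ deltaP α γ r
        < γ ^ ((r:ℝ) - 2 + (2:ℝ) ^ (1 - (r:ℝ))) / (1 - α * γ ^ ((2:ℝ) ^ r - 2))
    ∧ (∀ (j k : ℕ) (hjk : j < k) (hkn : k ≤ n), 1 ≤ j → ∀ f : E → ℝ, Measurable f → (∃ C : ℝ, ∀ x, |f x| ≤ C) →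
        maxNorm μ F j ((2:ℝ) ^ r) (qhat j k f)
          ≤ (Finset.univ.sup' Finset.univ_nonempty fun i : I j =>
              (succSet p j k i).sup' (hsne j k hjk hkn i) (Mprod μ F p j k))
            * deltaP α γ r * maxNorm μ F k ((2:ℝ) ^ r) f) := by
  have hpos : ∀ k j, k ≤ n → j ≤ n → ∀ i : I j, 0 < μ k (F j i) := fun k j hk hj i =>
    pos_iff_ne_zero.2 fun h0 => (hFpos j hj i).ne' (hμac 0 k (Nat.zero_le _) hk h0)
  have hmpos : ∀ j, j < n → ∀ i : I j, 0 < mRatio μ F j i := fun j hj i => by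
    have := hμprob j hj.le
    have := hμprob (j + 1) hj
    exact div_pos (ENNReal.toReal_pos (hpos _ _ hj hj.le i).ne' (measure_ne_top _ _))
      (ENNReal.toReal_pos (hpos _ _ hj.le hj.le i).ne' (measure_ne_top _ _))
  have hanc : ∀ j k, j < k → k ≤ n → ∀ (i : I j) (l : I k), F k l ⊆ F j i → p j k l = i := by
    intro j k hjk hk i l hl
    by_contra hne
    obtain ⟨x, hx⟩ := nonempty_of_measure_ne_zero (hFpos k hk l).ne'
    exact Set.disjoint_left.1 (hFdisj j (by omega) _ _ hne) (hp j k hjk hk l hx) (hl hx)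
  -- `G k` is the normalized density `ḡ_{k,k+1}`.
  set G : ℕ → E → ℝ := fun j y => g j y / (∫ z, g j z ∂(μ j)) with hGdef
  have hgb : ∀ k, BddMeas (g k) := fun k => by
    obtain ⟨C, hC⟩ := hgbdd k
    exact ⟨hgmeas k, C, fun x => by rw [abs_of_pos (hgpos k x)]; exact hC x⟩
  have hGb : ∀ k, BddMeas (G k) := fun k => by
    have : BddMeas fun x => g k x * (∫ z, g k z ∂(μ k))⁻¹ :=
      (hgb k).mul ⟨measurable_const, _, fun _ => le_rfl⟩
    exact this
  have hG0 : ∀ k x, 0 ≤ G k x := fun k x =>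
    div_nonneg (hgpos k x).le (integral_nonneg fun y => (hgpos k y).le)
  have hdens : ∀ k, k < n → ∀ f : E → ℝ, BddMeas f →
      ∫ x, f x ∂(μ (k + 1)) = ∫ x, G k x * f x ∂(μ k) := by
    intro k hk f hf
    rw [hgdens k hk f hf.1 hf.2, ← integral_div]
    congr 1
    ext x
    simp only [hGdef]
    ring
  have hqb : ∀ k, k ≤ n → ∀ f : E → ℝ, BddMeas f → ∀ d j, j + d = k →
      BddMeas (qhat j k f) := by
    intro k hk f hf d
    induction d with
    | zero => rintro j rfl; rw [add_zero, hqdiag]; exact hf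
    | succ d ih =>
      intro j hj
      have : qhat j k f = fun x => ∫ y, G j y * qhat (j + 1) k f y ∂(K j x) :=
        funext fun x => hqstep j k (by omega) hk f x
      rw [this]
      exact ((hGb j).mul (ih (j + 1) (by omega))).kernel (hKprob j) (hKmeas j)
  have main : ∀ (j k : ℕ) (hjk : j < k) (hkn : k ≤ n), 1 ≤ j → ∀ f : E → ℝ,
      Measurable f → (∃ C : ℝ, ∀ x, |f x| ≤ C) → ∀ i : I j,
        locNorm (muLoc (μ j) (F j i)) ((2:ℝ) ^ r) (qhat j k f)
          ≤ ((succSet p j k i).sup' (hsne j k hjk hkn i) (Mprod μ F p j k))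
            * deltaP α γ r
            * ((succSet p j k i).sup' (hsne j k hjk hkn i) fun l =>
                locNorm (muLoc (μ k) (F k l)) ((2:ℝ) ^ r) f) := by
    intro j₀ k hjk₀ hkn hj₀ f hfm hfb i₀
    have hf : BddMeas f := ⟨hfm, hfb⟩
    have hq : ∀ j, j ≤ k → BddMeas (qhat j k f) := fun j hj =>
      hqb k hkn f hf (k - j) j (by omega)
    have key := tree_induction (F := F) (anc := p) (m := fun j i => mRatio μ F j i)
      (X := fun t j i => ∫ x, |qhat j k f x| ^ 2 ^ t ∂(muLoc (μ j) (F j i)))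
      (X' := fun t j i => ∫ x, |qhat (j + 1) k f x| ^ 2 ^ t ∂(muLoc (μ (j + 1)) (F j i)))
      (k := k) hα hβ1 hγ hsmall (fun j hj i => hmpos j (by omega) i)
      (fun j hj i l hl => hanc j k hj hkn i l hl)
      (fun t j i => integral_nonneg fun x => by positivity)
      (fun t j hj hjk i C hC => by
        have hj1 : j + 1 ≤ n := by omega
        have := hμprob (j + 1) hj1
        have hmem : ∀ l : I (j + 1), l ∈ succSet p j (j + 1) i ↔ p j (j + 1) l = i := by
          intro l; simp [succSet]
        have hsub : ∀ l ∈ succSet p j (j + 1) i, F (j + 1) l ⊆ F j i := by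
          intro l hl
          have := hp j (j + 1) (Nat.lt_succ_self j) hj1 l
          rwa [(hmem l).1 hl] at this
        refine integral_muLoc_le_of_cells (succSet p j (j + 1) i) (G := F (j + 1))
          (fun l _ => hFmeas _ l) (fun l _ l' _ hne => hFdisj _ hj1 l l' hne) ?_
          (fun l _ => hpos _ _ hj1 hj1 l) (hpos _ _ hj1 (by omega) i)
          ((hq (j + 1) hjk).abs.pow _) (fun l hl => hC l (hsub l hl))
        refine Set.Subset.antisymm (fun x hx => ?_) (Set.iUnion₂_subset hsub)
        obtain ⟨l, hl⟩ := Set.mem_iUnion.1 ((hFcover (j + 1) hj1).symm ▸ Set.mem_univ x)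
        refine Set.mem_iUnion₂.2 ⟨l, (hmem l).2 ?_, hl⟩
        by_contra hne
        exact Set.disjoint_left.1 (hFdisj j (by omega) _ _ hne)
          (hp j (j + 1) (Nat.lt_succ_self j) hj1 l hl) hx)
      (fun j hj hjk i => by
        have hjn : j < n := by omega
        have := hμprob j hjn.le
        have := hμprob (j + 1) hjn
        simp only [pow_zero, pow_one]
        -- A point of the cell cannot be sent to any other cell, hence not to the complement.
        have hin : ∀ x ∈ F j i, K j x (F j i)ᶜ = 0 := by
          intro x hx
          have hsub : (F j i)ᶜ ⊆ ⋃ l : {l : I j // l ≠ i}, F j l := by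
            intro y hy
            obtain ⟨l, hl⟩ := Set.mem_iUnion.1 ((hFcover j hjn.le).symm ▸ Set.mem_univ y)
            refine Set.mem_iUnion.2 ⟨⟨l, ?_⟩, hl⟩
            rintro rfl
            exact hy hl
          refine measure_mono_null hsub (measure_iUnion_null fun l => ?_)
          exact hD j hj hjn.le l x fun hxl =>
            Set.disjoint_left.1 (hFdisj j hjn.le _ _ l.2) hxl hx
        set h := qhat (j + 1) k f with hh
        have hhb : BddMeas h := hq (j + 1) hjk
        have hGh := (hGb j).mul hhb.abs
        have hGh0 : ∀ x, 0 ≤ G j x * |h x| := fun x => mul_nonneg (hG0 j x) (abs_nonneg _)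
        have hle : ∀ x, |qhat j k f x| ≤ ∫ y, G j y * |h y| ∂(K j x) := by
          intro x
          rw [hqstep j k hjk hkn f x]
          refine abs_integral_le_integral_abs.trans_eq ?_
          congr 1
          ext y
          rw [abs_mul]
          exact congrArg (· * _) (abs_of_nonneg (hG0 j y))
        have hdi : ∫ x in F j i, G j x * |h x| ∂(μ j) =
            ∫ x in F j i, |h x| ∂(μ (j + 1)) := by
          rw [← integral_indicator (hFmeas j i), ← integral_indicator (hFmeas j i),
            hdens j hjn _ (hhb.abs.indicator (hFmeas j i))]
          congr 1
          ext x
          by_cases hx : x ∈ F j i <;> simp [hx]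
        refine (integral_mono_muLoc (hFmeas j i) (hpos _ _ hjn.le hjn.le i)
          (hq j hjk.le).abs (hGh.kernel (hKprob j) (hKmeas j)) fun x _ => hle x).trans_eq ?_
        rw [integral_muLoc, integral_muLoc, setIntegral_kernel (hKprob j) (hKmeas j)
          (hKinv j hjn.le) (hFmeas j i) (fun x hx => hD j hj hjn.le i x hx) hin hGh hGh0, hdi,
          mRatio]
        have h1 := (ENNReal.toReal_pos (hpos _ _ hjn hjn.le i).ne'
          (measure_ne_top (μ (j + 1)) _)).ne'
        field_simp)
      (fun t j hj hjk i => by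
        have hjn : j < n := by omega
        have := hμprob j hjn.le
        have := hμprob (j + 1) hjn
        have hqe : ∀ x, qhat j k f x = ∫ y, G j y * qhat (j + 1) k f y ∂(K j x) :=
          fun x => hqstep j k hjk hkn f x
        simp only [hqe]
        refine moment_step (hKprob j) (hKmeas j) (hFmeas j i) (hpos _ _ hjn.le hjn.le i)
          (hpos _ _ hjn hjn.le i) (hGb j) (hG0 j) (hq (j + 1) hjk) hα.le hβ0 ?_ ?_ t
        · intro x hx
          have h1 := ENNReal.toReal_pos (hpos _ _ hjn hjn.le i).ne'
            (measure_ne_top (μ (j + 1)) _)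
          have h2 := ENNReal.toReal_pos (hpos _ _ hjn.le hjn.le i).ne'
            (measure_ne_top (μ j) _)
          have h3 : (μ j (F j i)).toReal / (μ (j + 1) (F j i)).toReal * G j x ≤ γ :=
            hB j hjn i x hx
          rw [div_mul_eq_mul_div, div_le_iff₀ h1] at h3
          rw [mRatio, ← mul_div_assoc, le_div_iff₀ h2]
          linarith
        · intro u hu
          have h1 := hM j hj hjn i u hu.1 hu.2
          rw [locNorm_two_sq, locNorm_two_sq] at h1
          have hue : ∀ x, qhat j (j + 1) u x = ∫ y, G j y * u y ∂(K j x) := by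
            intro x
            rw [hqstep j (j + 1) (Nat.lt_succ_self j) hjn u x, hqdiag]
          simpa only [hue] using h1)
      (fun t i => integral_nonneg fun x => by positivity)
      (fun t i => by
        have := hμprob k hkn
        have := isProbabilityMeasure_muLoc (hpos k k hkn hkn i)
        simp only [hqdiag]
        have h1 := abs_integral_pow_le (muLoc (μ k) (F k i)) (hf.abs.pow (2 ^ t)) 2
        simpa only [sq_abs, abs_pow, abs_abs, ← pow_mul, ← pow_succ] using h1)
      r le_rfl (k - j₀) j₀ hj₀ (by omega) i₀
    obtain ⟨l₀, hl₀⟩ := hsne j₀ k hjk₀ hkn i₀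
    set A := (succSet p j₀ k i₀).sup' (hsne j₀ k hjk₀ hkn i₀) (Mprod μ F p j₀ k) with hAdef
    set B := (succSet p j₀ k i₀).sup' (hsne j₀ k hjk₀ hkn i₀) fun l =>
      locNorm (muLoc (μ k) (F k l)) ((2:ℝ) ^ r) f with hBdef
    have hA0 : 0 ≤ A := by
      refine le_trans ?_ (Finset.le_sup' (Mprod μ F p j₀ k) hl₀)
      exact Finset.prod_nonneg fun q hq =>
        (hmpos q (by have := Finset.mem_Ico.1 hq; omega) _).le
    have hB0 : 0 ≤ B := (locNorm_nonneg _ _ _).trans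
      (Finset.le_sup' (fun l => locNorm (muLoc (μ k) (F k l)) ((2:ℝ) ^ r) f) hl₀)
    have hδ := one_le_deltaP hα hγ r hsmall
    -- It suffices to compare `2^r`-th powers, where the tree induction applies.
    refine le_of_pow_le_pow_left₀ (n := 2 ^ r) (by positivity) (by positivity) ?_
    rw [locNorm_pow]
    refine key A B hA0 hB0 fun l hl => ?_
    have hls : l ∈ succSet p j₀ k i₀ := by
      simpa [succSet] using hanc j₀ k hjk₀ hkn i₀ l hl
    refine ⟨Finset.le_sup' (Mprod μ F p j₀ k) hls, ?_⟩
    simp only [hqdiag]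
    rw [← locNorm_pow]
    exact pow_le_pow_left₀ (locNorm_nonneg _ _ _)
      (Finset.le_sup' (fun l => locNorm (muLoc (μ k) (F k l)) ((2:ℝ) ^ r) f) hls) _
  refine ⟨main, deltaP_lt hα hγ r hsmall, ?_⟩
  intro j k hjk hkn hj f hfm hfb
  refine Finset.sup'_le _ _ fun i _ => (main j k hjk hkn hj f hfm hfb i).trans ?_
  have hδ := one_le_deltaP hα hγ r hsmall
  obtain ⟨l₀, hl₀⟩ := hsne j k hjk hkn i
  have hM0 : 0 ≤ (succSet p j k i).sup' (hsne j k hjk hkn i) (Mprod μ F p j k) := by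
    refine le_trans ?_ (Finset.le_sup' (Mprod μ F p j k) hl₀)
    exact Finset.prod_nonneg fun q hq =>
      (hmpos q (by have := Finset.mem_Ico.1 hq; omega) _).le
  have hMA := Finset.le_sup' (fun i : I j =>
    (succSet p j k i).sup' (hsne j k hjk hkn i) (Mprod μ F p j k)) (Finset.mem_univ i)
  refine mul_le_mul (mul_le_mul_of_nonneg_right hMA (by positivity)) ?_ ?_
    (mul_nonneg (hM0.trans hMA) (by positivity))
  · exact Finset.sup'_le _ _ fun l _ =>
      Finset.le_sup' (fun l => locNorm (muLoc (μ k) (F k l)) ((2:ℝ) ^ r) f)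
        (Finset.mem_univ l)
  · exact (locNorm_nonneg _ _ _).trans
      (Finset.le_sup' (fun l => locNorm (muLoc (μ k) (F k l)) ((2:ℝ) ^ r) f) hl₀)
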